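/- For online bin stretching with m = 4 bins, every behavioral randomized online algorithm A satisfies sup over all instances I of E(I,A) ≥ 11/9; in other words, no randomized online algorithm has stretching factor strictly less than 11/9. -/

import Mathlib

/-!
All sizes are multiples of `1/3`. Consider three instances, each of total volume `4`, which begin
with items of size `1/3` and then end differently:

* `I₁`: four items `1/3`, then `2/3, 2/3, 2/3, 2/3`;
* `I₂`: five items `1/3`, then `1, 2/3, 2/3`;
* `I₃`: six items `1/3`, then `1, 1`.

As the volume is `4`, the payoff is always at least `1`, and it is at least `4/3` unless every bin
has load exactly `1`. Exact filling forces the number of bins left empty by the initial items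
`1/3` to be `0` in `I₁`, `1` in `I₂` and `2` in `I₃`. The number of empty bins can only decrease, so
these three events, read on the decisions for six items `1/3` in a row, are mutually exclusive.
Hence their probabilities `p₁, p₂, p₃` satisfy `p₁ + p₂ + p₃ ≤ 1`, the expected payoff on `Iᵢ` is at
least `4/3 - pᵢ/3`, and the average over the three instances is at least `4/3 - 1/9 = 11/9`.

The events live on decision sequences of different lengths; `sum_prod_append` (marginalization of
a product distribution) transports them to six items `1/3`.
-/


open scoped BigOperators

namespace BinStretch

def Fits (m : ℕ) (I : List ℝ) : Prop :=
  ∃ σ : Fin I.length → Fin m,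
    ∀ b : Fin m, ∑ i ∈ Finset.univ.filter fun i => σ i = b, I.get i ≤ 1

def IsInstance (m : ℕ) (I : List ℝ) : Prop :=
  (∀ a ∈ I, 0 < a ∧ a ≤ 1) ∧ Fits m I

noncomputable def payoff (m : ℕ) (I : List ℝ) (D : Fin I.length → Fin m) : ℝ :=
  ⨆ b : Fin m, ∑ i ∈ Finset.univ.filter fun i => D i = b, I.get i

noncomputable def prob {m : ℕ} (A : List ℝ → PMF (Fin m)) (I : List ℝ)
    (D : Fin I.length → Fin m) : ℝ :=
  ∏ i : Fin I.length, ((A (I.take (i.1 + 1))) (D i)).toReal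

noncomputable def expPayoff (m : ℕ) (A : List ℝ → PMF (Fin m)) (I : List ℝ) : ℝ :=
  ∑ D : Fin I.length → Fin m, prob A I D * payoff m I D

def detRun {m : ℕ} (A : List ℝ → Fin m) (I : List ℝ) : Fin I.length → Fin m :=
  fun i => A (I.take (i.1 + 1))

end BinStretch

namespace BinStretch

open Finset

/-! ### Product distributions on decision sequences -/

lemma pmf_sum_toReal {m : ℕ} (p : PMF (Fin m)) : ∑ b, (p b).toReal = 1 := by
  rw [← ENNReal.toReal_sum (fun b _ => p.apply_ne_top b), ← tsum_fintype (L := .unconditional _),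
    p.tsum_coe, ENNReal.toReal_one]

lemma sum_prod_eq_one {n m : ℕ} (w : Fin n → Fin m → ℝ) (hw : ∀ i, ∑ b, w i b = 1) :
    ∑ D : Fin n → Fin m, ∏ i, w i (D i) = 1 := by
  rw [← Fintype.prod_sum]
  simp [hw]

/-- Marginalization: a function of the first `k` decisions has the same expectation under the
product distribution of `k + l` decisions as under that of the first `k`. -/
lemma sum_prod_append {k l m : ℕ} (w : Fin (k + l) → Fin m → ℝ) (hw : ∀ i, ∑ b, w i b = 1)
    (g : (Fin k → Fin m) → ℝ) :
    ∑ D : Fin (k + l) → Fin m, (∏ i, w i (D i)) * g (fun j => D (Fin.castAdd l j)) =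
      ∑ D : Fin k → Fin m, (∏ i, w (Fin.castAdd l i) (D i)) * g D := by
  rw [← (Fin.appendEquiv k l).sum_comp, Fintype.sum_prod_type]
  refine Finset.sum_congr rfl fun D _ => ?_
  have h := sum_prod_eq_one (fun i : Fin l => w (Fin.natAdd k i)) (fun i => hw _)
  simp only [Fin.appendEquiv, Equiv.coe_fn_mk, Fin.prod_univ_add, Fin.append_left,
    Fin.append_right]
  rw [← Finset.sum_mul, ← Finset.mul_sum, h, mul_one]

/-! ### Boundedness of the expected payoff -/

lemma prob_nonneg {m : ℕ} (A : List ℝ → PMF (Fin m)) (I : List ℝ) (D : Fin I.length → Fin m) :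
    0 ≤ prob A I D :=
  Finset.prod_nonneg fun _ _ => ENNReal.toReal_nonneg

lemma sum_prob {m : ℕ} (A : List ℝ → PMF (Fin m)) (I : List ℝ) :
    ∑ D : Fin I.length → Fin m, prob A I D = 1 :=
  sum_prod_eq_one (fun i b => ((A (I.take (i.1 + 1))) b).toReal) (fun _ => pmf_sum_toReal _)

lemma expPayoff_le {I : List ℝ} (A : List ℝ → PMF (Fin 4)) (hI : IsInstance 4 I) :
    expPayoff 4 A I ≤ 4 := by
  obtain ⟨hpos, σ, hσ⟩ := hI
  have htot : ∑ i, I.get i ≤ 4 := by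
    rw [← Finset.sum_fiberwise_of_maps_to (g := σ) (t := univ) (fun _ _ => mem_univ _)]
    calc _ ≤ ∑ _b : Fin 4, (1 : ℝ) := Finset.sum_le_sum fun b _ => hσ b
      _ = 4 := by simp
  have hpay : ∀ D, payoff 4 I D ≤ 4 := fun D => ciSup_le fun b =>
    (Finset.sum_le_sum_of_subset_of_nonneg (Finset.filter_subset _ _)
      (fun i _ _ => (hpos _ (List.get_mem I i)).1.le)).trans htot
  calc expPayoff 4 A I ≤ ∑ D, prob A I D * 4 :=
        Finset.sum_le_sum fun D _ => mul_le_mul_of_nonneg_left (hpay D) (prob_nonneg A I D)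
    _ = 4 := by rw [← Finset.sum_mul, sum_prob, one_mul]

/-! ### Empty bins and payoffs -/

/-- Number of bins that receive no item under the decisions `D`. -/
def emptyBins {k : ℕ} (D : Fin k → Fin 4) : ℕ :=
  #{b | ∀ i, D i ≠ b}

lemma emptyBins_append_le {k l : ℕ} (D : Fin (k + l) → Fin 4) :
    emptyBins D ≤ emptyBins (fun j : Fin k => D (Fin.castAdd l j)) := by
  refine Finset.card_le_card fun b => ?_
  simp only [mem_filter, mem_univ, true_and]
  exact fun h i => h _

/-- Number of items that the decisions `D` put into bin `b`. -/
def count {k : ℕ} (D : Fin k → Fin 4) (b : Fin 4) : ℕ :=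
  ∑ i, if D i = b then 1 else 0

lemma sum_count {k : ℕ} (D : Fin k → Fin 4) :
    count D 0 + count D 1 + count D 2 + count D 3 = k := by
  rw [← Fin.sum_univ_four (count D)]
  unfold count
  rw [Finset.sum_comm]
  simp

lemma emptyBins_eq {k : ℕ} (D : Fin k → Fin 4) :
    emptyBins D = (if count D 0 = 0 then 1 else 0) + (if count D 1 = 0 then 1 else 0) +
      (if count D 2 = 0 then 1 else 0) + (if count D 3 = 0 then 1 else 0) := by
  rw [← Fin.sum_univ_four (fun b => if count D b = 0 then 1 else 0), ← Finset.card_filter]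
  unfold emptyBins count
  congr 1
  ext b
  simp

/-- Load of bin `b` when the item sizes are the natural numbers `n i`. -/
def natLoad {s : ℕ} (n : Fin s → ℕ) (D : Fin s → Fin 4) (b : Fin 4) : ℕ :=
  ∑ i, if D i = b then n i else 0

lemma sum_natLoad {s : ℕ} (n : Fin s → ℕ) (D : Fin s → Fin 4) :
    ∑ b, natLoad n D b = ∑ i, n i := by
  unfold natLoad
  rw [Finset.sum_comm]
  simp

/-- For items in units of `1/3` with total volume `4`, the payoff is at least `1`, and at least
`4/3` unless no bin exceeds load `1`. -/
lemma payoff_ge {I : List ℝ} (n : Fin I.length → ℕ) (hn : ∀ i, I.get i = n i / 3)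
    (htot : ∑ i, n i = 12) (D : Fin I.length → Fin 4) (S : Prop) [Decidable S]
    (hS : (∀ b, natLoad n D b ≤ 3) → S) :
    4 / 3 - (if S then 1 else 0) / 3 ≤ payoff 4 I D := by
  have hload : ∀ b, (natLoad n D b : ℝ) / 3 ≤ payoff 4 I D := fun b => by
    have : (natLoad n D b : ℝ) / 3 =
        ∑ i ∈ Finset.univ.filter fun i => D i = b, I.get i := by
      rw [Finset.sum_filter]
      simp only [natLoad, hn]
      push_cast
      rw [Finset.sum_div]
      exact Finset.sum_congr rfl fun i _ => by split_ifs <;> simp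
    rw [this]
    exact le_ciSup (f := fun b => ∑ i ∈ Finset.univ.filter fun i => D i = b, I.get i)
      (Set.finite_range _).bddAbove b
  have hge : ∀ t, ∀ b, t ≤ natLoad n D b → (t : ℝ) / 3 ≤ payoff 4 I D := fun t b h =>
    le_trans (by gcongr) (hload b)
  split_ifs with h
  · obtain ⟨b, hb⟩ : ∃ b, 3 ≤ natLoad n D b := by
      by_contra! hlt
      have h12 := sum_natLoad n D
      rw [htot, Fin.sum_univ_four] at h12
      have := hlt 0; have := hlt 1; have := hlt 2; have := hlt 3
      omega
    have := hge 3 b hb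
    norm_num at this ⊢
    exact this
  · obtain ⟨b, hb⟩ : ∃ b, 4 ≤ natLoad n D b := by
      by_contra! hlt
      exact h (hS fun b => by have := hlt b; omega)
    have := hge 4 b hb
    norm_num at this ⊢
    exact this

/-! ### The three hard instances -/

/-- The probability, under `A`, that the decisions for `k` initial items of size `1/3` leave a
number of bins empty that satisfies `P`. -/
noncomputable def emptyProb (A : List ℝ → PMF (Fin 4)) (k : ℕ) (P : ℕ → Prop)
    [DecidablePred P] : ℝ :=
  ∑ D : Fin k → Fin 4, (∏ i : Fin k, (A (List.replicate (i.1 + 1) (1 / 3)) (D i)).toReal) *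
    (if P (emptyBins D) then 1 else 0)

/-- Lower bound for the expected payoff on an instance that starts with `k` items of size `1/3`
and has payoff at least `4/3` unless these leave a number of empty bins satisfying `P`. -/
lemma expPayoff_ge (A : List ℝ → PMF (Fin 4)) (k : ℕ) (T : List ℝ) {l : ℕ}
    (P : ℕ → Prop) [DecidablePred P]
    (hlen : (List.replicate k (1 / 3 : ℝ) ++ T).length = k + l)
    (hpay : ∀ D, 4 / 3 - (if P (emptyBins fun j : Fin k =>
        D (Fin.cast hlen.symm (Fin.castAdd l j))) then 1 else 0) / 3 ≤
      payoff 4 (List.replicate k (1 / 3 : ℝ) ++ T) D) :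
    4 / 3 - emptyProb A k P / 3 ≤ expPayoff 4 A (List.replicate k (1 / 3 : ℝ) ++ T) := by
  set I := List.replicate k (1 / 3 : ℝ) ++ T with hI
  have hmarg : emptyProb A k P = ∑ D : Fin I.length → Fin 4, prob A I D *
      (if P (emptyBins fun j : Fin k => D (Fin.cast hlen.symm (Fin.castAdd l j)))
        then 1 else 0) := by
    have h := sum_prod_append (k := k) (l := l)
      (fun i b => ((A (I.take (i.1 + 1))) b).toReal) (fun _ => pmf_sum_toReal _)
      (fun D => if P (emptyBins D) then 1 else 0)
    rw [emptyProb, ← (Equiv.arrowCongr (finCongr hlen.symm) (Equiv.refl (Fin 4))).sum_comp]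
    refine Eq.trans ?_ (h.symm.trans ?_)
    · refine Finset.sum_congr rfl fun D _ => ?_
      congr 1
      refine Finset.prod_congr rfl fun i _ => ?_
      have : I.take (i.1 + 1) = List.replicate (i.1 + 1) (1 / 3) := by
        rw [hI, List.take_append_of_le_length (by simp), List.take_replicate,
          min_eq_left (by omega)]
      simp [this]
    · refine Finset.sum_congr rfl fun D _ => ?_
      congr 1
      unfold prob
      rw [← (finCongr hlen.symm).prod_comp]
      simp
  calc 4 / 3 - emptyProb A k P / 3
      = ∑ D, prob A I D * (4 / 3 - (if P (emptyBins fun j : Fin k =>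
          D (Fin.cast hlen.symm (Fin.castAdd l j))) then 1 else 0) / 3) := by
        simp only [mul_sub, Finset.sum_sub_distrib, ← mul_div_assoc, ← Finset.sum_div,
          ← Finset.sum_mul, sum_prob, ← hmarg, one_mul]
    _ ≤ _ := Finset.sum_le_sum fun D _ =>
        mul_le_mul_of_nonneg_left (hpay D) (prob_nonneg A I D)

/-- Let `D`, `F`, `E` place `k` items of size `1/3`, `q` of size `1` and `p` of size `2/3`, of total
volume `4`, with no bin above load `1`. Then every bin has load exactly `1`, and the bins without
an item of size `1/3` are those that hold an item of size `1`. -/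
lemma emptyBins_eq_of_fit {k q p : ℕ} (D : Fin k → Fin 4) (F : Fin q → Fin 4)
    (E : Fin p → Fin 4) (hvol : k + 3 * q + 2 * p = 12)
    (h : ∀ b, count D b + (3 * count F b + 2 * count E b) ≤ 3) : emptyBins D = q := by
  have hD := sum_count D
  have hF := sum_count F
  have hE := sum_count E
  have h0 := h 0
  have h1 := h 1
  have h2 := h 2
  have h3 := h 3
  have key : ∀ b, count D b + (3 * count F b + 2 * count E b) = 3 →
      (if count D b = 0 then 1 else 0) = count F b := by
    intro b hb
    split_ifs <;> omega
  rw [emptyBins_eq, key 0 (by omega), key 1 (by omega), key 2 (by omega), key 3 (by omega), hF]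

/-- The three hard instances are the cases `(k, q, p) = (4, 0, 4), (5, 1, 2), (6, 2, 0)`. -/
lemma expPayoff_ge_of_volume (A : List ℝ → PMF (Fin 4)) (k q p : ℕ)
    (hvol : k + 3 * q + 2 * p = 12) :
    4 / 3 - emptyProb A k (· = q) / 3 ≤ expPayoff 4 A
      (List.replicate k (1 / 3) ++ (List.replicate q 1 ++ List.replicate p (2 / 3))) := by
  have hlen : (List.replicate k (1 / 3 : ℝ) ++
      (List.replicate q 1 ++ List.replicate p (2 / 3))).length = k + (q + p) := by simp
  refine expPayoff_ge A k _ (l := q + p) _ hlen fun D => ?_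
  -- The sizes `1/3`, `1`, `2/3` occupy consecutive blocks of indices, and sums split accordingly.
  have hsplit : ∀ g : ℕ → Fin (k + (q + p)) → ℕ,
      ∑ i : Fin (k + (q + p)), g (if i.1 < k then 1 else if i.1 < k + q then 3 else 2) i =
        ∑ i : Fin k, g 1 (Fin.castAdd _ i) + (∑ i : Fin q, g 3 (Fin.natAdd k (Fin.castAdd p i)) +
          ∑ i : Fin p, g 2 (Fin.natAdd k (Fin.natAdd q i))) := by
    intro g
    rw [Fin.sum_univ_add, Fin.sum_univ_add]
    simp
  refine payoff_ge (fun i => if i.1 < k then 1 else if i.1 < k + q then 3 else 2) ?_ ?_ D _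
    fun h => ?_
  · intro i
    simp only [List.get_eq_getElem, List.getElem_append, List.getElem_replicate,
      List.length_replicate]
    split_ifs <;> first | (exfalso; omega) | norm_num
  · rw [← (finCongr hlen.symm).sum_comp]
    refine (hsplit fun n _ => n).trans ?_
    simp
    omega
  · refine emptyBins_eq_of_fit _
      (fun j : Fin q => D (Fin.cast hlen.symm (Fin.natAdd k (Fin.castAdd p j))))
      (fun j : Fin p => D (Fin.cast hlen.symm (Fin.natAdd k (Fin.natAdd q j)))) hvol fun b => ?_
    refine le_trans (le_of_eq ?_) (h b)
    unfold natLoad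
    rw [← (finCongr hlen.symm).sum_comp]
    refine Eq.trans ?_ (hsplit fun n i => if D (Fin.cast hlen.symm i) = b then n else 0).symm
    simp only [count, Finset.mul_sum, mul_ite, mul_one, mul_zero]

lemma isInstance_one :
    IsInstance 4 (List.replicate 4 (1 / 3) ++ (List.replicate 0 1 ++ List.replicate 4 (2 / 3))) := by
  refine ⟨by norm_num, (![0, 1, 2, 3, 0, 1, 2, 3] : Fin 8 → Fin 4), fun b => ?_⟩
  rw [Finset.sum_filter]
  refine (Fin.sum_univ_eight _).trans_le ?_
  change (if (0 : Fin 4) = b then (1 / 3 : ℝ) else 0) + (if (1 : Fin 4) = b then (1 / 3 : ℝ) else 0) +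
    (if (2 : Fin 4) = b then (1 / 3 : ℝ) else 0) + (if (3 : Fin 4) = b then (1 / 3 : ℝ) else 0) +
    (if (0 : Fin 4) = b then (2 / 3 : ℝ) else 0) + (if (1 : Fin 4) = b then (2 / 3 : ℝ) else 0) +
    (if (2 : Fin 4) = b then (2 / 3 : ℝ) else 0) + (if (3 : Fin 4) = b then (2 / 3 : ℝ) else 0) ≤ 1
  fin_cases b <;> norm_num [Fin.ext_iff]

lemma isInstance_two :
    IsInstance 4 (List.replicate 5 (1 / 3) ++ (List.replicate 1 1 ++ List.replicate 2 (2 / 3))) := by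
  refine ⟨by norm_num, (![0, 0, 0, 1, 2, 3, 1, 2] : Fin 8 → Fin 4), fun b => ?_⟩
  rw [Finset.sum_filter]
  refine (Fin.sum_univ_eight _).trans_le ?_
  change (if (0 : Fin 4) = b then (1 / 3 : ℝ) else 0) + (if (0 : Fin 4) = b then (1 / 3 : ℝ) else 0) +
    (if (0 : Fin 4) = b then (1 / 3 : ℝ) else 0) + (if (1 : Fin 4) = b then (1 / 3 : ℝ) else 0) +
    (if (2 : Fin 4) = b then (1 / 3 : ℝ) else 0) + (if (3 : Fin 4) = b then (1 : ℝ) else 0) +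
    (if (1 : Fin 4) = b then (2 / 3 : ℝ) else 0) + (if (2 : Fin 4) = b then (2 / 3 : ℝ) else 0) ≤ 1
  fin_cases b <;> norm_num [Fin.ext_iff]

lemma isInstance_three :
    IsInstance 4 (List.replicate 6 (1 / 3) ++ (List.replicate 2 1 ++ List.replicate 0 (2 / 3))) := by
  refine ⟨by norm_num, (![0, 0, 0, 1, 1, 1, 2, 3] : Fin 8 → Fin 4), fun b => ?_⟩
  rw [Finset.sum_filter]
  refine (Fin.sum_univ_eight _).trans_le ?_
  change (if (0 : Fin 4) = b then (1 / 3 : ℝ) else 0) + (if (0 : Fin 4) = b then (1 / 3 : ℝ) else 0) +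
    (if (0 : Fin 4) = b then (1 / 3 : ℝ) else 0) + (if (1 : Fin 4) = b then (1 / 3 : ℝ) else 0) +
    (if (1 : Fin 4) = b then (1 / 3 : ℝ) else 0) + (if (1 : Fin 4) = b then (1 / 3 : ℝ) else 0) +
    (if (2 : Fin 4) = b then (1 : ℝ) else 0) + (if (3 : Fin 4) = b then (1 : ℝ) else 0) ≤ 1
  fin_cases b <;> norm_num [Fin.ext_iff]

/-- The three events are mutually exclusive because the number of empty bins never increases. -/
lemma emptyProb_sum_le (A : List ℝ → PMF (Fin 4)) :
    emptyProb A 4 (· = 0) + emptyProb A 5 (· = 1) + emptyProb A 6 (· = 2) ≤ 1 := by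
  let w : Fin 6 → Fin 4 → ℝ := fun i b => (A (List.replicate (i.1 + 1) (1 / 3)) b).toReal
  have hw : ∀ i, ∑ b, w i b = 1 := fun i => pmf_sum_toReal _
  have h4 : emptyProb A 4 (· = 0) = ∑ D : Fin 6 → Fin 4, (∏ i, w i (D i)) *
      (if emptyBins (fun j : Fin 4 => D (Fin.castAdd 2 j)) = 0 then 1 else 0) :=
    (sum_prod_append (k := 4) (l := 2) w hw (fun D => if emptyBins D = 0 then 1 else 0)).symm
  have h5 : emptyProb A 5 (· = 1) = ∑ D : Fin 6 → Fin 4, (∏ i, w i (D i)) *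
      (if emptyBins (fun j : Fin 5 => D (Fin.castAdd 1 j)) = 1 then 1 else 0) :=
    (sum_prod_append (k := 5) (l := 1) w hw (fun D => if emptyBins D = 1 then 1 else 0)).symm
  have h6 : emptyProb A 6 (· = 2) = ∑ D : Fin 6 → Fin 4, (∏ i, w i (D i)) *
      (if emptyBins D = 2 then 1 else 0) := rfl
  rw [h4, h5, h6, ← Finset.sum_add_distrib, ← Finset.sum_add_distrib]
  refine le_trans (Finset.sum_le_sum fun D _ => ?_) (sum_prod_eq_one w hw).le
  rw [← mul_add, ← mul_add]
  refine mul_le_of_le_one_right (Finset.prod_nonneg fun _ _ => ENNReal.toReal_nonneg) ?_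
  have h65 := emptyBins_append_le (k := 5) (l := 1) D
  have h54 := emptyBins_append_le (k := 4) (l := 1) (fun j : Fin 5 => D (Fin.castAdd 1 j))
  change _ ≤ emptyBins (fun j : Fin 4 => D (Fin.castAdd 2 j)) at h54
  split_ifs <;> first | (exfalso; omega) | norm_num

end BinStretch

theorem randomized_lower_bound_four_bins (A : List ℝ → PMF (Fin 4)) :
    (11 : ℝ) / 9 ≤ ⨆ I : {I : List ℝ // BinStretch.IsInstance 4 I},
      BinStretch.expPayoff 4 A I.1 := by
  -- The supremum is over a bounded family, so it is not a junk value.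
  have hbdd : BddAbove (Set.range fun I : {I : List ℝ // BinStretch.IsInstance 4 I} =>
      BinStretch.expPayoff 4 A I.1) :=
    ⟨4, by rintro _ ⟨I, rfl⟩; exact BinStretch.expPayoff_le A I.2⟩
  have h1 := (BinStretch.expPayoff_ge_of_volume A 4 0 4 rfl).trans
    (le_ciSup hbdd ⟨_, BinStretch.isInstance_one⟩)
  have h2 := (BinStretch.expPayoff_ge_of_volume A 5 1 2 rfl).trans
    (le_ciSup hbdd ⟨_, BinStretch.isInstance_two⟩)
  have h3 := (BinStretch.expPayoff_ge_of_volume A 6 2 0 rfl).trans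
    (le_ciSup hbdd ⟨_, BinStretch.isInstance_three⟩)
  have h := BinStretch.emptyProb_sum_le A
  linarith
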